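/- Every biconnected outerplanar graph G with at least 3 vertices contains a good closed chain: a chain whose two endpoints are adjacent in G, such that the chain together with the edge between its endpoints bounds a face, and at least one endpoint has degree at most 4. -/

import Mathlib

open SimpleGraph

universe u₁ u₂

variable {V : Type u₁} {W : Type u₂}

/-- `H` is a minor of `G`: there is a branch decomposition, i.e. a partial map
assigning to some vertices of `G` a vertex of `H`, whose branch sets are
nonempty and connected, and such that every edge of `H` is realized by an
edge of `G` between the corresponding branch sets. -/
def IsMinorOf (H : SimpleGraph W) (G : SimpleGraph V) : Prop :=
  ∃ f : V → Option W,
    (∀ w : W, (G.induce {v | f v = some w}).Connected) ∧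
    (∀ w₁ w₂ : W, H.Adj w₁ w₂ →
      ∃ v₁ v₂ : V, f v₁ = some w₁ ∧ f v₂ = some w₂ ∧ G.Adj v₁ v₂)

/-- The cone over `G`: add a new apex vertex adjacent to all vertices of `G`. -/
def cone (G : SimpleGraph V) : SimpleGraph (Option V) :=
  SimpleGraph.fromRel (fun a b =>
    a = none ∨ ∃ u v : V, a = some u ∧ b = some v ∧ G.Adj u v)

/-- A graph is planar iff it has neither a `K₅` nor a `K₃,₃` minor (Wagner). -/
def Planar (G : SimpleGraph V) : Prop :=
  ¬ IsMinorOf (⊤ : SimpleGraph (Fin 5)) G ∧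
  ¬ IsMinorOf (completeBipartiteGraph (Fin 3) (Fin 3)) G

/-- A graph is outerplanar iff the cone over it is planar (equivalently, it
has a planar embedding with all vertices on the outer face). -/
def Outerplanar (G : SimpleGraph V) : Prop := Planar (cone G)

/-- `v` is a cut vertex of `G`: `G` is connected but deleting `v` disconnects it. -/
def IsCutVertex (G : SimpleGraph V) (v : V) : Prop :=
  G.Connected ∧ ¬ (G.induce {u | u ≠ v}).Connected

/-- `G` is biconnected: connected with no cut vertex. -/
def Biconnected (G : SimpleGraph V) : Prop :=
  G.Connected ∧ ∀ v : V, ¬ IsCutVertex G v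

/-- Degree of a vertex, as the cardinality of its neighbour set. -/
noncomputable def deg (G : SimpleGraph V) (v : V) : ℕ := (G.neighborSet v).ncard

/-- Two `a`-`b` walks are internally vertex-disjoint if they share no
vertices other than `a` and `b`. -/
def InternallyDisjoint {G : SimpleGraph V} {a b : V} (p q : G.Walk a b) : Prop :=
  ∀ w : V, w ∈ p.support → w ∈ q.support → w = a ∨ w = b

/-- A chain of `G` with endpoints `a` and `b`, represented by the path `p`
from `a` to `b`: all internal vertices have degree two, and either both
endpoints have degree greater than two (a path chain), or the chain is a
cycle of degree-two vertices, represented by a Hamiltonian-on-its-support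
path between two adjacent vertices `a` and `b` of the cycle. -/
def IsGraphChain (G : SimpleGraph V) {a b : V} (p : G.Walk a b) : Prop :=
  p.IsPath ∧ 2 ≤ p.length ∧
    (∀ v ∈ p.support, v ≠ a → v ≠ b → deg G v = 2) ∧
    ((2 < deg G a ∧ 2 < deg G b) ∨
      (G.Adj a b ∧ ∀ v ∈ p.support, deg G v = 2))

/-- The graph on the endpoints of the edges in `E'`, with edge set `E'`. -/
def graphOn (E' : Set (Sym2 V)) :
    SimpleGraph {v : V | ∃ e ∈ E', v ∈ e} :=
  (SimpleGraph.fromEdgeSet E').induce {v : V | ∃ e ∈ E', v ∈ e}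

section Helpers

theorem minor_of_sets {U : Type*} {W' : Type*} (H : SimpleGraph W') (K : SimpleGraph U) (A : W' → Set U)
    (hd : ∀ w w', w ≠ w' → Disjoint (A w) (A w'))
    (hc : ∀ w, (K.induce (A w)).Connected)
    (ha : ∀ w w', H.Adj w w' → ∃ u ∈ A w, ∃ v ∈ A w', K.Adj u v) : IsMinorOf H K := by
  classical
  let f : U → Option W' := fun u => if h : ∃ w, u ∈ A w then some h.choose else none
  have hf : ∀ u w, f u = some w ↔ u ∈ A w := by
    intro u w
    by_cases h : ∃ w, u ∈ A w
    · have h1 : f u = some h.choose := by simp only [f, dif_pos h]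
      rw [h1]
      have h2 := h.choose_spec
      constructor
      · intro h3
        rw [Option.some_inj] at h3
        rw [h3] at h2
        exact h2
      · intro h3
        by_contra h4
        have h5 : h.choose ≠ w := fun h6 => h4 (by rw [h6])
        exact Set.disjoint_left.1 (hd _ _ h5) h2 h3
    · have h1 : f u = none := by simp only [f, dif_neg h]
      rw [h1]
      constructor
      · intro h2
        cases h2
      · intro h2
        exact absurd ⟨w, h2⟩ h
  refine ⟨f, ?_, ?_⟩
  · intro w
    have : {v | f v = some w} = A w := by
      ext u
      exact hf u w
    rw [this]
    exact hc w
  · intro w w' hw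
    obtain ⟨u, hu, v, hv, huv⟩ := ha w w' hw
    exact ⟨u, v, (hf _ _).2 hu, (hf _ _).2 hv, huv⟩

theorem cone_some {G : SimpleGraph V} {a b : V} (h : G.Adj a b) : (cone G).Adj (some a) (some b) := by
  simp only [cone, SimpleGraph.fromRel_adj]
  refine ⟨fun h1 => h.ne (Option.some_inj.1 h1), Or.inl (Or.inr ⟨a, b, rfl, rfl, h⟩)⟩

theorem cone_none {G : SimpleGraph V} {a : V} : (cone G).Adj none (some a) := by
  simp [cone, SimpleGraph.fromRel_adj]

theorem conn_singleton {U : Type*} (K : SimpleGraph U) (u : U) : (K.induce {u}).Connected := by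
  have : Nonempty ({u} : Set U) := ⟨⟨u, rfl⟩⟩
  refine ⟨?_⟩
  intro a b
  have : a = b := Subsingleton.elim _ _
  rw [this]

theorem conn_cone {G : SimpleGraph V} {S : Set V} (h : (G.induce S).Connected) :
    ((cone G).induce (some '' S)).Connected := by
  let φ : G.induce S →g (cone G).induce (some '' S) :=
    { toFun := fun v => ⟨some v.1, ⟨v.1, v.2, rfl⟩⟩
      map_rel' := by
        intro a b hab
        exact cone_some hab }
  refine h.map φ ?_
  rintro ⟨_, v, hv, rfl⟩
  exact ⟨⟨v, hv⟩, rfl⟩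

theorem no_k23 {G : SimpleGraph V} (hO : Outerplanar G) (x y : V) (hxy : x ≠ y) (B : Fin 3 → Set V)
    (hd : ∀ s t, s ≠ t → Disjoint (B s) (B t)) (hc : ∀ t, (G.induce (B t)).Connected)
    (hx : ∀ t, x ∉ B t) (hy : ∀ t, y ∉ B t)
    (hxa : ∀ t, ∃ v ∈ B t, G.Adj x v) (hya : ∀ t, ∃ v ∈ B t, G.Adj y v) : False := by
  apply hO.2
  let A : Fin 3 ⊕ Fin 3 → Set (Option V) :=
    Sum.elim ![{some x}, {some y}, {none}] (fun t => some '' B t)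
  have hlr : ∀ s t, Disjoint (A (Sum.inl s)) (A (Sum.inr t)) := by
    intro s t
    fin_cases s <;> simp [A, hx, hy]
  have hadj : ∀ s t, ∃ u ∈ A (Sum.inl s), ∃ v ∈ A (Sum.inr t), (cone G).Adj u v := by
    intro s t
    obtain ⟨v, hv, hxv⟩ := hxa t
    obtain ⟨v', hv', hyv⟩ := hya t
    fin_cases s
    · exact ⟨some x, rfl, some v, ⟨v, hv, rfl⟩, cone_some hxv⟩
    · exact ⟨some y, rfl, some v', ⟨v', hv', rfl⟩, cone_some hyv⟩
    · exact ⟨none, rfl, some v, ⟨v, hv, rfl⟩, cone_none⟩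
  refine minor_of_sets _ _ A ?_ ?_ ?_
  · rintro (s | s) (t | t) hst
    · fin_cases s <;> fin_cases t <;> simp_all [A, hxy.symm]
    · exact hlr s t
    · exact (hlr t s).symm
    · have : s ≠ t := fun h => hst (by rw [h])
      exact (Set.disjoint_image_iff (Option.some_injective V)).2 (hd s t this)
  · rintro (s | s)
    · fin_cases s <;> exact conn_singleton _ _
    · exact conn_cone (hc s)
  · rintro (s | s) (t | t) hst
    · simp at hst
    · exact hadj s t
    · obtain ⟨u, hu, v, hv, h⟩ := hadj t s
      exact ⟨v, hv, u, hu, h.symm⟩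
    · simp at hst

theorem no_k4 {G : SimpleGraph V} (hO : Outerplanar G) (B : Fin 4 → Set V)
    (hd : ∀ s t, s < t → Disjoint (B s) (B t)) (hc : ∀ t, (G.induce (B t)).Connected)
    (ha : ∀ s t, s < t → ∃ u ∈ B s, ∃ v ∈ B t, G.Adj u v) : False := by
  apply hO.1
  let A : Fin 5 → Set (Option V) := Fin.cases {none} (fun t => some '' B t)
  have hne : ∀ t, (B t).Nonempty := by
    intro t
    obtain ⟨v⟩ := (hc t).nonempty
    exact ⟨v.1, v.2⟩
  have h0 : A 0 = {none} := rfl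
  have hs : ∀ t : Fin 4, A t.succ = some '' B t := fun t => rfl
  have key : ∀ s t : Fin 5, s < t → Disjoint (A s) (A t) ∧ ∃ u ∈ A s, ∃ v ∈ A t, (cone G).Adj u v := by
    intro s t hst
    induction s using Fin.cases with
    | zero =>
      induction t using Fin.cases with
      | zero => simp at hst
      | succ t =>
        rw [h0, hs]
        obtain ⟨v, hv⟩ := hne t
        exact ⟨by simp, none, rfl, some v, ⟨v, hv, rfl⟩, cone_none⟩
    | succ s =>
      induction t using Fin.cases with
      | zero => simp at hst
      | succ t =>
        rw [hs, hs]
        have hst' : s < t := by simpa using hst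
        obtain ⟨u, hu, v, hv, h⟩ := ha s t hst'
        exact ⟨(Set.disjoint_image_iff (Option.some_injective V)).2 (hd s t hst'),
          some u, ⟨u, hu, rfl⟩, some v, ⟨v, hv, rfl⟩, cone_some h⟩
  refine minor_of_sets _ _ A ?_ ?_ ?_
  · intro s t hst
    rcases lt_or_gt_of_ne hst with h | h
    · exact (key s t h).1
    · exact (key t s h).1.symm
  · intro s
    induction s using Fin.cases with
    | zero => exact conn_singleton _ _
    | succ s => exact conn_cone (hc s)
  · intro s t hst
    rcases lt_or_gt_of_ne hst.ne with h | h
    · exact (key s t h).2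
    · obtain ⟨u, hu, v, hv, h⟩ := (key t s h).2
      exact ⟨v, hv, u, hu, h.symm⟩

structure Cyc (G : SimpleGraph V) (n : ℕ) (c : ℤ → V) : Prop where
  two : 2 ≤ n
  per : ∀ i, c (i + n) = c i
  adj : ∀ i, G.Adj (c i) (c (i + 1))
  inj : ∀ i j, c i = c j → i ≤ j → j < i + n → i = j

theorem Cyc.cover {G : SimpleGraph V} {n : ℕ} {c : ℤ → V} (h : Cyc G n c) (k m : ℤ) :
    ∃ m', k ≤ m' ∧ m' < k + n ∧ c m' = c m := by
  have h2 := h.two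
  have hn : (0 : ℤ) < n := by omega
  have hp : Function.Periodic c (n : ℤ) := h.per
  refine ⟨k + (m - k) % n, ?_, ?_, ?_⟩
  · have := Int.emod_nonneg (m - k) hn.ne'
    omega
  · have := Int.emod_lt_of_pos (m - k) hn
    omega
  · have h3 := Int.emod_add_mul_ediv (m - k) n
    have h4 : k + (m - k) % n = m - ((m - k) / n) * n := by linarith
    rw [h4]
    exact hp.sub_int_mul_eq _

theorem Cyc.arc_conn {G : SimpleGraph V} {n : ℕ} {c : ℤ → V} (h : Cyc G n c) (l r : ℤ) (hlr : l ≤ r) :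
    (G.induce (c '' Set.Icc l r)).Connected := by
  have hl : c l ∈ c '' Set.Icc l r := ⟨l, ⟨le_refl _, hlr⟩, rfl⟩
  have key : ∀ t : ℕ, ∀ ht : l + t ≤ r, (G.induce (c '' Set.Icc l r)).Reachable ⟨c l, hl⟩
      ⟨c (l + t), ⟨l + t, ⟨by omega, ht⟩, rfl⟩⟩ := by
    intro t
    induction t with
    | zero =>
      intro ht
      simp
    | succ t ih =>
      intro ht
      push_cast at ht
      refine (ih (by omega)).trans (SimpleGraph.Adj.reachable ?_)
      have := h.adj (l + t)
      simp only [SimpleGraph.comap_adj, SimpleGraph.induce, Function.Embedding.subtype_apply]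
      rw [add_assoc] at this
      exact_mod_cast this
  rw [SimpleGraph.connected_iff_exists_forall_reachable]
  refine ⟨⟨c l, hl⟩, ?_⟩
  rintro ⟨_, i, ⟨hi1, hi2⟩, rfl⟩
  obtain ⟨t, ht⟩ := Int.eq_ofNat_of_zero_le (sub_nonneg.2 hi1)
  have h1 : i = l + t := by omega
  subst h1
  exact key t hi2

theorem Cyc.arc_disj {G : SimpleGraph V} {n : ℕ} {c : ℤ → V} (h : Cyc G n c) (l r l' r' : ℤ)
    (h1 : r < l') (h2 : r' < l + n) : Disjoint (c '' Set.Icc l r) (c '' Set.Icc l' r') := by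
  rw [Set.disjoint_left]
  rintro _ ⟨i, ⟨hi1, hi2⟩, rfl⟩ ⟨j, ⟨hj1, hj2⟩, hij⟩
  have := h.inj i j hij.symm (by omega) (by omega)
  omega

theorem Cyc.nc {G : SimpleGraph V} {n : ℕ} {c : ℤ → V} (h : Cyc G n c) (hO : Outerplanar G)
    {a b x d : ℤ} (hab : a < b) (hbx : b < x) (hxd : x < d) (hd : d < a + n)
    (h1 : G.Adj (c a) (c x)) (h2 : G.Adj (c b) (c d)) : False := by
  refine no_k4 hO ![c '' Set.Icc a (b-1), c '' Set.Icc b (x-1), c '' Set.Icc x (d-1),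
    c '' Set.Icc d (a+n-1)] ?_ ?_ ?_
  · intro s t hst
    fin_cases s <;> fin_cases t <;> first
      | (exfalso; revert hst; decide)
      | (exact h.arc_disj _ _ _ _ (by omega) (by omega))
  · intro t
    fin_cases t <;> exact h.arc_conn _ _ (by omega)
  · have hm : ∀ l r i : ℤ, l ≤ i → i ≤ r → c i ∈ c '' Set.Icc l r := fun l r i h1 h2 => ⟨i, ⟨h1, h2⟩, rfl⟩
    have ha : ∀ i, G.Adj (c (i - 1)) (c i) := by
      intro i
      have := h.adj (i-1)
      rwa [sub_add_cancel] at this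
    intro s t hst
    fin_cases s <;> fin_cases t <;> first
      | (exfalso; revert hst; decide)
      | skip
    · exact ⟨_, hm _ _ (b-1) (by omega) (by omega), _, hm _ _ b (by omega) (by omega), ha b⟩
    · exact ⟨_, hm _ _ a (by omega) (by omega), _, hm _ _ x (by omega) (by omega), h1⟩
    · refine ⟨_, hm _ _ a (by omega) (by omega), _, hm _ _ (a+n-1) (by omega) (by omega), ?_⟩
      have := ha (a+n)
      rw [h.per] at this
      exact this.symm
    · exact ⟨_, hm _ _ (x-1) (by omega) (by omega), _, hm _ _ x (by omega) (by omega), ha x⟩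
    · exact ⟨_, hm _ _ b (by omega) (by omega), _, hm _ _ d (by omega) (by omega), h2⟩
    · exact ⟨_, hm _ _ (d-1) (by omega) (by omega), _, hm _ _ d (by omega) (by omega), ha d⟩

theorem cyc_of_fun {G : SimpleGraph V} (N : ℕ) (hN : 2 ≤ N) (f : ℕ → V)
    (hinj : ∀ s t, s < N → t < N → f s = f t → s = t)
    (hadj : ∀ t, t + 1 < N → G.Adj (f t) (f (t+1))) (hcl : G.Adj (f (N-1)) (f 0)) :
    Cyc G N (fun i => f (i % (N:ℤ)).toNat) := by
  have hn : (0 : ℤ) < N := by omega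
  refine ⟨hN, ?_, ?_, ?_⟩
  · intro i
    simp
  · intro i
    have h1 := Int.emod_nonneg i hn.ne'
    have h2 := Int.emod_lt_of_pos i hn
    obtain ⟨t, ht⟩ := Int.eq_ofNat_of_zero_le h1
    have h3 : (i + 1) % (N:ℤ) = ((t:ℤ) + 1) % N := by
      rw [← ht]; simp
    simp only [h3, ht]
    by_cases h4 : t + 1 < N
    · rw [Int.emod_eq_of_lt (by omega) (by omega)]
      exact_mod_cast hadj t h4
    · have h5 : t = N - 1 := by omega
      have h6 : (t:ℤ) + 1 = N := by omega
      rw [h6, Int.emod_self]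
      simp only [Int.toNat_natCast, Int.toNat_zero]
      rw [h5]
      exact hcl
  · intro i j hij hle hlt
    have h1 := Int.emod_nonneg i hn.ne'
    have h2 := Int.emod_lt_of_pos i hn
    have h1' := Int.emod_nonneg j hn.ne'
    have h2' := Int.emod_lt_of_pos j hn
    have h3 := hinj _ _ (by omega) (by omega) hij
    have h4 : i % N = j % N := by omega
    have h5 : (N:ℤ) ∣ j - i := Int.ModEq.dvd h4
    have h6 := Int.eq_zero_of_dvd_of_nonneg_of_lt (by omega) (by omega) h5
    omega

/-- extension by a path through the outside -/
theorem Cyc.extend {G : SimpleGraph V} {n : ℕ} {c : ℤ → V} (h : Cyc G n c) (k : ℤ) {d₁ d₂ : V}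
    (p : G.Walk d₁ d₂) (hp : p.IsPath) (hd : ∀ v ∈ p.support, ∀ i, c i ≠ v)
    (h1 : G.Adj (c k) d₁) (h2 : G.Adj (c (k+1)) d₂) : ∃ c', Cyc G (n + (p.length + 1)) c' := by
  have htwo := h.two
  let f : ℕ → V := fun t => if t < n then c (k + 1 + t) else p.getVert (t - n)
  have hf1 : ∀ t, t < n → f t = c (k+1+t) := fun t ht => by simp only [f, if_pos ht]
  have hf2 : ∀ t, ¬ t < n → f t = p.getVert (t-n) := fun t ht => by simp only [f, if_neg ht]
  refine ⟨_, cyc_of_fun (n + (p.length + 1)) (by omega) f ?_ ?_ ?_⟩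
  · intro s t hs ht hst
    by_cases h3 : s < n <;> by_cases h4 : t < n
    · rw [hf1 s h3, hf1 t h4] at hst
      rcases le_total s t with h5 | h5
      · have := h.inj _ _ hst (by omega) (by omega)
        omega
      · have := h.inj _ _ hst.symm (by omega) (by omega)
        omega
    · rw [hf1 s h3, hf2 t h4] at hst
      exact absurd hst (hd _ (p.getVert_mem_support _) _)
    · rw [hf2 s h3, hf1 t h4] at hst
      exact absurd hst.symm (hd _ (p.getVert_mem_support _) _)
    · rw [hf2 s h3, hf2 t h4] at hst
      have := hp.getVert_injOn (by simp; omega) (by simp; omega) hst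
      omega
  · intro t ht
    by_cases h3 : t + 1 < n
    · rw [hf1 t (by omega), hf1 (t+1) h3]
      have := h.adj (k+1+t)
      push_cast
      rwa [← add_assoc]
    · by_cases h4 : t < n
      · rw [hf1 t h4, hf2 _ h3]
        have h5 : k + 1 + (t:ℤ) = k + n := by omega
        have h6 : t + 1 - n = 0 := by omega
        rw [h5, h.per, h6, p.getVert_zero]
        exact h1
      · rw [hf2 t h4, hf2 _ h3]
        have h6 : t + 1 - n = t - n + 1 := by omega
        rw [h6]
        exact p.adj_getVert_succ (by omega)
  · rw [hf2 _ (by omega), hf1 0 (by omega)]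
    have h6 : n + (p.length + 1) - 1 - n = p.length := by omega
    rw [h6, p.getVert_length]
    simpa using h2.symm

theorem boundary {U : Type*} {K : SimpleGraph U} (h : K.Connected) (S : Set U) {u v : U}
    (hu : u ∈ S) (hv : v ∉ S) : ∃ a ∈ S, ∃ b, b ∉ S ∧ K.Adj a b := by
  obtain ⟨p⟩ := h.preconnected u v
  obtain ⟨d, -, h1, h2⟩ := p.exists_boundary_dart S hu hv
  exact ⟨_, h1, _, h2, d.adj⟩

theorem Cyc.step {G : SimpleGraph V} {n : ℕ} {c : ℤ → V} (h : Cyc G n c) (hB : Biconnected G)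
    (hO : Outerplanar G) (v₀ : V) (hv₀ : ∀ i, c i ≠ v₀) : ∃ m c', n < m ∧ Cyc G m c' := by
  have htwo := h.two
  let S : Set V := {v | ∀ i, c i ≠ v}
  let H := G.induce S
  let C := H.connectedComponentMk ⟨v₀, hv₀⟩
  let D : Set V := Subtype.val '' C.supp
  have hv₀D : v₀ ∈ D := ⟨⟨v₀, hv₀⟩, rfl, rfl⟩
  have hDS : ∀ v ∈ D, ∀ i, c i ≠ v := by
    rintro _ ⟨v, -, rfl⟩
    exact v.2
  have hcD : ∀ i, c i ∉ D := fun i hi => hDS _ hi i rfl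
  have hDc : (G.induce D).Connected := by
    have h1 : (H.induce C.supp).Connected := C.connected_toSimpleGraph
    let φ : H.induce C.supp →g G.induce D :=
      { toFun := fun v => ⟨v.1.1, ⟨v.1, v.2, rfl⟩⟩
        map_rel' := by
          intro a b hab
          exact hab }
    refine h1.map φ ?_
    rintro ⟨_, v, hv, rfl⟩
    exact ⟨⟨v, hv⟩, rfl⟩
  have hbd : ∀ a ∈ D, ∀ b, b ∉ D → G.Adj a b → ∃ i, c i = b := by
    rintro _ ⟨a, ha, rfl⟩ b hb hab
    by_contra hcon
    push Not at hcon
    apply hb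
    refine ⟨⟨b, hcon⟩, ?_, rfl⟩
    have hab' : H.Adj a ⟨b, hcon⟩ := hab
    exact (SimpleGraph.ConnectedComponent.mem_supp_congr_adj C hab').1 ha
  obtain ⟨d₁, hd₁, x, hx, hdx⟩ := boundary hB.1 D hv₀D (hcD 0)
  obtain ⟨i, rfl⟩ := hbd _ hd₁ _ hx hdx
  have hBi : (G.induce {u | u ≠ c i}).Connected := by
    by_contra hcon
    exact hB.2 (c i) ⟨hB.1, hcon⟩
  obtain ⟨⟨d₂, hd₂'⟩, hd₂, ⟨y, hy'⟩, hy, hdy⟩ := boundary hBi {u | u.1 ∈ D}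
    (u := ⟨v₀, fun h => hv₀ i h.symm⟩) (v := ⟨c (i+1), (h.adj i).ne'⟩) hv₀D (hcD _)
  replace hdy : G.Adj d₂ y := hdy
  replace hd₂ : d₂ ∈ D := hd₂
  obtain ⟨j₀, hj₀⟩ := hbd _ hd₂ _ hy hdy
  obtain ⟨j, hj1, hj2, hj3⟩ := h.cover i j₀
  have hjy : c j = y := hj3.trans hj₀
  subst hjy
  have hij : j ≠ i := by
    rintro rfl
    exact hy' rfl
  have hpath : ∀ e₁ ∈ D, ∀ e₂ ∈ D, ∃ p : G.Walk e₁ e₂, p.IsPath ∧ ∀ v ∈ p.support, ∀ i, c i ≠ v := by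
    rintro _ ⟨e₁, he₁, rfl⟩ _ ⟨e₂, he₂, rfl⟩
    have hr : H.Reachable e₁ e₂ := SimpleGraph.ConnectedComponent.eq.1 (he₁.trans he₂.symm)
    obtain ⟨p, hp⟩ := hr.exists_isPath
    let φ : H →g G := (SimpleGraph.Embedding.induce S).toHom
    refine ⟨p.map φ, SimpleGraph.Walk.IsPath.map Subtype.val_injective hp, ?_⟩
    intro v hv
    have hv' : v ∈ p.support.map φ := by
      have e := SimpleGraph.Walk.support_map φ p
      exact e ▸ hv
    obtain ⟨w, -, rfl⟩ := List.mem_map.1 hv'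
    exact w.2
  by_cases hc1 : j = i + 1
  · subst hc1
    obtain ⟨p, hp, hps⟩ := hpath _ hd₁ _ hd₂
    obtain ⟨c', hc'⟩ := h.extend i p hp hps hdx.symm hdy.symm
    exact ⟨_, c', by omega, hc'⟩
  by_cases hc2 : j = i + n - 1
  · subst hc2
    obtain ⟨p, hp, hps⟩ := hpath _ hd₂ _ hd₁
    obtain ⟨c', hc'⟩ := h.extend (i + n - 1) p hp hps hdy.symm
      (by rw [sub_add_cancel, h.per]; exact hdx.symm)
    exact ⟨_, c', by omega, hc'⟩
  exfalso
  have harc : ∀ l r, Disjoint D (c '' Set.Icc l r) := by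
    intro l r
    rw [Set.disjoint_left]
    rintro v hv ⟨t, -, rfl⟩
    exact hcD _ hv
  have hPQ : Disjoint (c '' Set.Icc (i+1) (j-1)) (c '' Set.Icc (j+1) (i+n-1)) :=
    h.arc_disj _ _ _ _ (by omega) (by omega)
  have hm : ∀ l r i : ℤ, l ≤ i → i ≤ r → c i ∈ c '' Set.Icc l r := fun l r i h1 h2 => ⟨i, ⟨h1, h2⟩, rfl⟩
  have ha : ∀ i, G.Adj (c i) (c (i - 1)) := by
    intro i
    have := h.adj (i-1)
    rw [sub_add_cancel] at this
    exact this.symm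
  refine no_k23 hO (c i) (c j) (fun h => hy' h.symm)
    ![D, c '' Set.Icc (i+1) (j-1), c '' Set.Icc (j+1) (i+n-1)] ?_ ?_ ?_ ?_ ?_ ?_
  · intro s t hst
    fin_cases s <;> fin_cases t <;> first
      | (exact absurd rfl hst)
      | (exact harc _ _)
      | (exact (harc _ _).symm)
      | (exact hPQ)
      | (exact hPQ.symm)
  · intro t
    fin_cases t
    · exact hDc
    · exact h.arc_conn _ _ (by omega)
    · exact h.arc_conn _ _ (by omega)
  · intro t
    fin_cases t
    · exact hcD i
    · rintro ⟨t, ⟨ht1, ht2⟩, ht⟩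
      have := h.inj _ _ ht.symm (by omega) (by omega)
      omega
    · rintro ⟨t, ⟨ht1, ht2⟩, ht⟩
      have := h.inj _ _ ht.symm (by omega) (by omega)
      omega
  · intro t
    fin_cases t
    · exact hcD j
    · rintro ⟨t, ⟨ht1, ht2⟩, ht⟩
      have := h.inj _ _ ht (by omega) (by omega)
      omega
    · rintro ⟨t, ⟨ht1, ht2⟩, ht⟩
      have := h.inj _ _ ht.symm (by omega) (by omega)
      omega
  · intro t
    fin_cases t
    · exact ⟨_, hd₁, hdx.symm⟩
    · exact ⟨_, hm _ _ (i+1) (by omega) (by omega), h.adj i⟩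
    · refine ⟨_, hm _ _ (i+n-1) (by omega) (by omega), ?_⟩
      have := ha (i+n)
      rwa [h.per] at this
  · intro t
    fin_cases t
    · exact ⟨_, hd₂, hdy.symm⟩
    · exact ⟨_, hm _ _ (j-1) (by omega) (by omega), ha j⟩
    · exact ⟨_, hm _ _ (j+1) (by omega) (by omega), h.adj j⟩

theorem Cyc.card_le [Fintype V] {G : SimpleGraph V} {n : ℕ} {c : ℤ → V} (h : Cyc G n c) :
    n ≤ Fintype.card V := by
  have : Function.Injective (fun t : Fin n => c (t.1 : ℤ)) := by
    intro s t hst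
    have hs := s.2
    have ht := t.2
    ext
    rcases le_total s.1 t.1 with h1 | h1
    · have := h.inj _ _ hst (by omega) (by omega)
      omega
    · have := h.inj _ _ hst.symm (by omega) (by omega)
      omega
  simpa using Fintype.card_le_of_injective _ this

theorem exists_ham [Fintype V] {G : SimpleGraph V}
    (hB : Biconnected G) (hO : Outerplanar G) (h3 : 3 ≤ Fintype.card V) :
    ∃ n c, 3 ≤ n ∧ Cyc G n c ∧ ∀ v, ∃ i, c i = v := by
  have key : ∀ k n c, Cyc G n c → Fintype.card V - n = k → ∃ n c, Cyc G n c ∧ ∀ v, ∃ i, c i = v := by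
    intro k
    induction k using Nat.strong_induction_on with
    | _ k ih =>
      intro n c h hk
      by_cases hs : ∀ v, ∃ i, c i = v
      · exact ⟨n, c, h, hs⟩
      · push Not at hs
        obtain ⟨v₀, hv₀⟩ := hs
        obtain ⟨m, c', hm, hc'⟩ := h.step hB hO v₀ hv₀
        have := hc'.card_le
        exact ih (Fintype.card V - m) (by omega) m c' hc' rfl
  have : Nontrivial V := Fintype.one_lt_card_iff_nontrivial.1 (by omega)
  obtain ⟨u, v, huv⟩ := exists_pair_ne V
  obtain ⟨a, -, b, -, hab⟩ := boundary hB.1 {u} (u := u) (v := v) rfl (fun h => huv h.symm)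
  have h0 := cyc_of_fun (G := G) 2 le_rfl (fun t => if t = 0 then a else b)
    (by
      intro s t hs ht hst
      have := hab.ne
      have := hab.ne'
      interval_cases s <;> interval_cases t <;> simp_all)
    (by
      intro t ht
      have : t = 0 := by omega
      subst this
      simpa using hab)
    (by simpa using hab.symm)
  obtain ⟨n, c, h, hs⟩ := key _ _ _ h0 rfl
  refine ⟨n, c, ?_, h, hs⟩
  have h2 := h.two
  have : Function.Surjective (fun t : Fin n => c (t.1 : ℤ)) := by
    intro v
    obtain ⟨i, rfl⟩ := hs v
    obtain ⟨m, hm1, hm2, hm3⟩ := h.cover 0 i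
    refine ⟨⟨m.toNat, by omega⟩, ?_⟩
    simp only
    rw [Int.toNat_of_nonneg hm1, hm3]
  have := Fintype.card_le_of_surjective _ this
  simp at this
  omega

theorem Cyc.walk {G : SimpleGraph V} {n : ℕ} {c : ℤ → V} (h : Cyc G n c) (i : ℤ) (L : ℕ) (hL : L < n) :
    ∃ p : G.Walk (c i) (c (i + L)), p.IsPath ∧ p.length = L ∧
      ∀ v ∈ p.support, ∃ k, i ≤ k ∧ k ≤ i + L ∧ v = c k := by
  induction L with
  | zero =>
    have : c (i + (0:ℕ)) = c i := by simp
    rw [this]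
    refine ⟨SimpleGraph.Walk.nil, by simp, rfl, ?_⟩
    intro v hv
    exact ⟨i, le_rfl, by simp, by simpa using hv⟩
  | succ L ih =>
    obtain ⟨p, hp, hl, hs⟩ := ih (by omega)
    have ha := h.adj (i + L)
    have h1 : i + (L:ℤ) + 1 = i + ((L + 1 : ℕ) : ℤ) := by push_cast; ring
    rw [h1] at ha
    refine ⟨p.concat ha, ?_, by simp [hl], ?_⟩
    · refine hp.concat ?_ ha
      intro hmem
      obtain ⟨k, hk1, hk2, hk3⟩ := hs _ hmem
      have := h.inj _ _ hk3.symm (by omega) (by omega)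
      omega
    · intro v hv
      rw [SimpleGraph.Walk.support_concat, List.mem_append, List.mem_singleton] at hv
      rcases hv with hv | hv
      · obtain ⟨k, hk1, hk2, hk3⟩ := hs _ hv
        exact ⟨k, hk1, by omega, hk3⟩
      · exact ⟨_, by omega, le_rfl, hv⟩

theorem Cyc.deg_two {G : SimpleGraph V} {n : ℕ} {c : ℤ → V} (h : Cyc G n c) (h3 : 3 ≤ n) (k : ℤ)
    (hk : ∀ v, G.Adj (c k) v → v = c (k+1) ∨ v = c (k-1)) : deg G (c k) = 2 := by
  have : G.neighborSet (c k) = {c (k+1), c (k-1)} := by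
    ext v
    simp only [SimpleGraph.mem_neighborSet, Set.mem_insert_iff, Set.mem_singleton_iff]
    constructor
    · exact hk v
    · rintro (rfl | rfl)
      · exact h.adj k
      · have := h.adj (k-1)
        rw [sub_add_cancel] at this
        exact this.symm
  rw [deg, this, Set.ncard_pair]
  intro h1
  have := h.inj _ _ h1.symm (by omega) (by omega)
  omega

theorem Cyc.deg_gt [Finite V] {G : SimpleGraph V} {n : ℕ} {c : ℤ → V} (h : Cyc G n c) (k m : ℤ)
    (hm : k + 2 ≤ m) (hm' : m ≤ k + n - 2) (ha : G.Adj (c k) (c m)) : 2 < deg G (c k) := by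
  have hsub : ({c (k+1), c m, c (k+n-1)} : Set V) ⊆ G.neighborSet (c k) := by
    rintro v (rfl | rfl | rfl)
    · exact h.adj k
    · exact ha
    · have := h.adj (k+n-1)
      rw [sub_add_cancel, h.per] at this
      exact this.symm
  have h1 := Set.ncard_le_ncard hsub (Set.toFinite _)
  have h2 : ({c (k+1), c m, c (k+n-1)} : Set V).ncard = 3 := by
    rw [Set.ncard_eq_three]
    refine ⟨_, _, _, ?_, ?_, ?_, rfl⟩ <;>
    · intro hh
      have := h.inj _ _ hh (by omega) (by omega)
      omega
  unfold deg
  omega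

def Ch (G : SimpleGraph V) (n : ℕ) (c : ℤ → V) (i j : ℤ) : Prop :=
  G.Adj (c i) (c j) ∧ i + 2 ≤ j ∧ j ≤ i + n - 2

def MinCh (G : SimpleGraph V) (n : ℕ) (c : ℤ → V) (i j : ℤ) : Prop :=
  Ch G n c i j ∧ ∀ i' j', Ch G n c i' j' → i ≤ i' → j' ≤ j → i' = i ∧ j' = j

/-- the generic neighbour analysis inside a chord -/
theorem Cyc.nbr {G : SimpleGraph V} {n : ℕ} {c : ℤ → V} (h : Cyc G n c) (hO : Outerplanar G)
    (hs : ∀ v, ∃ i, c i = v) {i j w : ℤ} (hij : Ch G n c i j) (h1 : i < w) (h2 : w < j) {v : V}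
    (hv : G.Adj (c w) v) : v = c (w+1) ∨ v = c (w-1) ∨ (∃ m, m ≤ j ∧ Ch G n c w m ∧ v = c m) ∨
      (∃ m, i ≤ m ∧ Ch G n c m w ∧ v = c m) := by
  obtain ⟨m₀, rfl⟩ := hs v
  obtain ⟨m, hm1, hm2, hm3⟩ := h.cover i m₀
  rw [← hm3] at hv ⊢
  obtain ⟨ha, hb, hc⟩ := hij
  have hmj : m ≤ j := by
    by_contra hcon
    exact h.nc hO h1 h2 (not_le.1 hcon) hm2 ha hv
  have hne : m ≠ w := by
    rintro rfl
    exact hv.ne rfl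
  by_cases e1 : m = w + 1
  · left; rw [e1]
  by_cases e2 : m = w - 1
  · right; left; rw [e2]
  right; right
  by_cases e3 : w < m
  · left
    exact ⟨m, hmj, ⟨hv, by omega, by omega⟩, rfl⟩
  · right
    exact ⟨m, hm1, ⟨hv.symm, by omega, by omega⟩, rfl⟩

theorem Cyc.min_chain [Finite V] {G : SimpleGraph V} {n : ℕ} {c : ℤ → V} (h : Cyc G n c) (h3 : 3 ≤ n)
    (hO : Outerplanar G) (hs : ∀ v, ∃ i, c i = v) {i j : ℤ} (hij : MinCh G n c i j)
    (hd : deg G (c i) ≤ 4 ∨ deg G (c j) ≤ 4) :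
    ∃ (a b : V) (p : G.Walk a b), IsGraphChain G p ∧ G.Adj a b ∧
      (deg G a ≤ 4 ∨ deg G b ≤ 4) := by
  obtain ⟨hc, hmin⟩ := hij
  obtain ⟨ha, hb, hb'⟩ := hc
  obtain ⟨L, hL⟩ := Int.eq_ofNat_of_zero_le (show 0 ≤ j - i by omega)
  have hjL : j = i + L := by omega
  subst hjL
  obtain ⟨p, hp, hl, hps⟩ := h.walk i L (by omega)
  refine ⟨_, _, p, ⟨hp, by omega, ?_, Or.inl ⟨h.deg_gt _ _ hb hb' ha, ?_⟩⟩, ha, hd⟩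
  · intro v hv hvi hvj
    obtain ⟨k, hk1, hk2, rfl⟩ := hps v hv
    have e1 : k ≠ i := by rintro rfl; exact hvi rfl
    have e2 : k ≠ i + L := by rintro rfl; exact hvj rfl
    refine h.deg_two h3 k ?_
    intro u hu
    rcases h.nbr hO hs ⟨ha, hb, hb'⟩ (by omega) (by omega) hu with e | e | ⟨m, hm, hch, -⟩ | ⟨m, hm, hch, -⟩
    · exact Or.inl e
    · exact Or.inr e
    · have := hmin _ _ hch (by omega) (by omega)
      omega
    · have := hmin _ _ hch (by omega) (by omega)
      omega
  · refine h.deg_gt (i+L) (i+n) (by omega) (by omega) ?_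
    rw [h.per]
    exact ha.symm

theorem sub_ncard [Finite V] {S : Set V} (h : ∀ a ∈ S, ∀ b ∈ S, a = b) : S.ncard ≤ 1 := by
  have : S.Subsingleton := fun a ha b hb => h a ha b hb
  exact Set.ncard_le_one_iff_subsingleton.2 this

theorem Cyc.deg_le_four [Finite V] {G : SimpleGraph V} {n : ℕ} {c : ℤ → V} (h : Cyc G n c)
    (hO : Outerplanar G) (hs : ∀ v, ∃ i, c i = v) {i j w : ℤ} (hij : Ch G n c i j)
    (hmin : ∀ k l, Ch G n c k l → i ≤ k → l ≤ j → (k ≠ i ∨ l ≠ j) → MinCh G n c k l)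
    (h1 : i < w) (h2 : w < j) : deg G (c w) ≤ 4 := by
  let F : Set V := {v | ∃ m, m ≤ j ∧ Ch G n c w m ∧ v = c m}
  let B : Set V := {v | ∃ m, i ≤ m ∧ Ch G n c m w ∧ v = c m}
  have hF : F.ncard ≤ 1 := by
    apply sub_ncard
    rintro _ ⟨m, hm, hch, rfl⟩ _ ⟨m', hm', hch', rfl⟩
    rcases le_total m m' with e | e
    · have := (hmin _ _ hch' (by omega) hm' (by omega)).2 _ _ hch le_rfl e
      rw [this.2]
    · have := (hmin _ _ hch (by omega) hm (by omega)).2 _ _ hch' le_rfl e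
      rw [this.2]
  have hBB : B.ncard ≤ 1 := by
    apply sub_ncard
    rintro _ ⟨m, hm, hch, rfl⟩ _ ⟨m', hm', hch', rfl⟩
    rcases le_total m m' with e | e
    · have := (hmin _ _ hch hm (by omega) (by omega)).2 _ _ hch' e le_rfl
      rw [this.1]
    · have := (hmin _ _ hch' hm' (by omega) (by omega)).2 _ _ hch e le_rfl
      rw [this.1]
  have hsub : G.neighborSet (c w) ⊆ ({c (w+1), c (w-1)} ∪ F) ∪ B := by
    intro v hv
    rcases h.nbr hO hs hij h1 h2 hv with e | e | e | e
    · left; left; left; exact e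
    · left; left; right; exact e
    · left; right; exact e
    · right; exact e
  have e1 := Set.ncard_le_ncard hsub (Set.toFinite _)
  have e2 := Set.ncard_union_le ({c (w+1), c (w-1)} ∪ F) B
  have e3 := Set.ncard_union_le {c (w+1), c (w-1)} F
  have e4 := Set.ncard_insert_le (c (w+1)) {c (w-1)}
  rw [Set.ncard_singleton] at e4
  unfold deg
  omega

theorem Cyc.nbr' {G : SimpleGraph V} {n : ℕ} {c : ℤ → V} (h : Cyc G n c)
    (hs : ∀ v, ∃ i, c i = v) {w : ℤ} {v : V} (hv : G.Adj (c w) v) :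
    v = c (w+1) ∨ v = c (w-1) ∨ (∃ m, Ch G n c w m ∧ v = c m) := by
  obtain ⟨m₀, rfl⟩ := hs v
  obtain ⟨m, hm1, hm2, hm3⟩ := h.cover w m₀
  rw [← hm3] at hv ⊢
  have hne : m ≠ w := by
    rintro rfl
    exact hv.ne rfl
  by_cases e1 : m = w + 1
  · left; rw [e1]
  by_cases e2 : m = w + n - 1
  · right; left
    rw [e2, ← h.per (w-1)]
    congr 1
    ring
  right; right
  exact ⟨m, ⟨hv, by omega, by omega⟩, rfl⟩

theorem Cyc.deg_le_three [Finite V] {G : SimpleGraph V} {n : ℕ} {c : ℤ → V} (h : Cyc G n c)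
    (hs : ∀ v, ∃ i, c i = v) (hmin : ∀ k l, Ch G n c k l → MinCh G n c k l) (w : ℤ) :
    deg G (c w) ≤ 4 := by
  let F : Set V := {v | ∃ m, Ch G n c w m ∧ v = c m}
  have hF : F.ncard ≤ 1 := by
    apply sub_ncard
    rintro _ ⟨m, hch, rfl⟩ _ ⟨m', hch', rfl⟩
    rcases le_total m m' with e | e
    · have := (hmin _ _ hch').2 _ _ hch le_rfl e
      rw [this.2]
    · have := (hmin _ _ hch).2 _ _ hch' le_rfl e
      rw [this.2]
  have hsub : G.neighborSet (c w) ⊆ {c (w+1), c (w-1)} ∪ F := by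
    intro v hv
    rcases h.nbr' hs hv with e | e | e
    · left; left; exact e
    · left; right; exact e
    · right; exact e
  have e1 := Set.ncard_le_ncard hsub (Set.toFinite _)
  have e3 := Set.ncard_union_le {c (w+1), c (w-1)} F
  have e4 := Set.ncard_insert_le (c (w+1)) {c (w-1)}
  rw [Set.ncard_singleton] at e4
  unfold deg
  omega

theorem Cyc.nonmin [Finite V] {G : SimpleGraph V} {n : ℕ} {c : ℤ → V} (h : Cyc G n c) (h3 : 3 ≤ n)
    (hO : Outerplanar G) (hs : ∀ v, ∃ i, c i = v) (L : ℕ) :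
    ∀ i j : ℤ, j - i = L → Ch G n c i j → ¬ MinCh G n c i j →
    ∃ (a b : V) (p : G.Walk a b), IsGraphChain G p ∧ G.Adj a b ∧
      (deg G a ≤ 4 ∨ deg G b ≤ 4) := by
  induction L using Nat.strong_induction_on with
  | _ L ih =>
    intro i j hL hij hn
    by_cases hmin : ∀ k l, Ch G n c k l → i ≤ k → l ≤ j → (k ≠ i ∨ l ≠ j) → MinCh G n c k l
    · have : ∃ k l, Ch G n c k l ∧ i ≤ k ∧ l ≤ j ∧ (k ≠ i ∨ l ≠ j) := by
        by_contra hcon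
        push Not at hcon
        refine hn ⟨hij, ?_⟩
        intro i' j' h1 h2 h3
        by_contra h4
        have := hcon i' j' h1 h2 h3
        omega
      obtain ⟨k, l, hkl, h1, h2, h4⟩ := this
      have hm := hmin k l hkl h1 h2 h4
      have hlen := hkl.2
      refine h.min_chain h3 hO hs hm ?_
      by_cases h5 : k = i
      · right
        exact h.deg_le_four hO hs hij hmin (by omega) (by omega)
      · left
        exact h.deg_le_four hO hs hij hmin (by omega) (by omega)
    · push Not at hmin
      obtain ⟨k, l, hkl, h1, h2, h4, h5⟩ := hmin
      have hlen := hkl.2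
      exact ih (l - k).toNat (by omega) k l (by omega) hkl h5

end Helpers

/-- Every biconnected outerplanar graph with at least three vertices contains
a good closed chain: a chain whose endpoints are adjacent (so that the chain
together with this edge bounds a face) and one of whose endpoints has degree
at most four. -/
theorem exists_good_closed_chain [Fintype V] {G : SimpleGraph V}
    (hB : Biconnected G) (hO : Outerplanar G) (h3 : 3 ≤ Fintype.card V) :
    ∃ (a b : V) (p : G.Walk a b), IsGraphChain G p ∧ G.Adj a b ∧
      (deg G a ≤ 4 ∨ deg G b ≤ 4) := by
  obtain ⟨n, c, hn, h, hs⟩ := exists_ham hB hO h3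
  by_cases h1 : ∀ k l, Ch G n c k l → MinCh G n c k l
  · by_cases h2 : ∃ k l, Ch G n c k l
    · obtain ⟨k, l, hkl⟩ := h2
      exact h.min_chain hn hO hs (h1 k l hkl) (Or.inl (h.deg_le_three hs h1 k))
    · push Not at h2
      have hdeg : ∀ k, deg G (c k) = 2 := by
        intro k
        refine h.deg_two hn k ?_
        intro v hv
        rcases h.nbr' hs hv with e | e | ⟨m, hm, -⟩
        · exact Or.inl e
        · exact Or.inr e
        · exact absurd hm (h2 _ _)
      obtain ⟨p, hp, hl, hps⟩ := h.walk 0 (n-1) (by omega)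
      have hall : ∀ v, deg G v = 2 := by
        intro v
        obtain ⟨i, rfl⟩ := hs v
        exact hdeg i
      have hadj : G.Adj (c 0) (c (0 + ((n - 1 : ℕ) : ℤ))) := by
        have e := h.adj (0 + ((n - 1 : ℕ) : ℤ))
        have e2 : (0 : ℤ) + ((n - 1 : ℕ) : ℤ) + 1 = 0 + n := by omega
        rw [e2, h.per] at e
        exact e.symm
      exact ⟨_, _, p, ⟨hp, by omega, fun v _ _ _ => hall v, Or.inr ⟨hadj, fun v _ => hall v⟩⟩, hadj,
        Or.inl (by rw [hall]; norm_num)⟩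
  · push Not at h1
    obtain ⟨k, l, hkl, hm⟩ := h1
    have := hkl.2
    exact h.nonmin hn hO hs (l - k).toNat k l (by omega) hkl hm
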